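/- arXiv:2405.13222 — 2 statements merged into one kernel-verified Lean document; each statement's English description precedes it below -/
import Mathlib

section
/- There exists a constant λ₁ > 0 such that for every smooth compactly supported function v ∈ C_c^∞(D), the Poincaré inequality ∫_D |∇_γ v|² dxdy ≥ λ₁ ∫_D |v|² dxdy holds (hence by density it holds for every v in the Sobolev space H₀^{1,γ}(D)). -/
open MeasureTheory Real Set Filter
open scoped ENNReal

noncomputable section

/-- The Baouendi–Grushin space `ℝ^m × ℝ^k`. -/
abbrev GS (m k : ℕ) := EuclideanSpace ℝ (Fin m) × EuclideanSpace ℝ (Fin k)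

/-- Unit coordinate vector in the `i`-th `x`-direction. -/
def eX (m k : ℕ) (i : Fin m) : GS m k := (EuclideanSpace.single i (1 : ℝ), 0)

/-- Unit coordinate vector in the `j`-th `y`-direction. -/
def eY (m k : ℕ) (j : Fin k) : GS m k := (0, EuclideanSpace.single j (1 : ℝ))

/-- Squared length `|∇_γ v|²` of the Baouendi–Grushin gradient
`∇_γ v = (∇_x v, |x|^γ ∇_y v)`. -/
def gradSqG {m k : ℕ} (γ : ℝ) (v : GS m k → ℝ) (z : GS m k) : ℝ :=
  (∑ i, (fderiv ℝ v z (eX m k i)) ^ 2) +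
    ‖z.1‖ ^ (2 * γ) * ∑ j, (fderiv ℝ v z (eY m k j)) ^ 2

/-- Pointwise inner product `∇_γ v · ∇_γ w` of Baouendi–Grushin gradients. -/
def dotG {m k : ℕ} (γ : ℝ) (v w : GS m k → ℝ) (z : GS m k) : ℝ :=
  (∑ i, fderiv ℝ v z (eX m k i) * fderiv ℝ w z (eX m k i)) +
    ‖z.1‖ ^ (2 * γ) * ∑ j, fderiv ℝ v z (eY m k j) * fderiv ℝ w z (eY m k j)

/-- The Baouendi–Grushin operator `Δ_γ v = Δ_x v + |x|^{2γ} Δ_y v`. -/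
def lapG {m k : ℕ} (γ : ℝ) (v : GS m k → ℝ) (z : GS m k) : ℝ :=
  (∑ i, fderiv ℝ (fun w => fderiv ℝ v w (eX m k i)) z (eX m k i)) +
    ‖z.1‖ ^ (2 * γ) * ∑ j, fderiv ℝ (fun w => fderiv ℝ v w (eY m k j)) z (eY m k j)

/-- The antiderivative `F(x) = ∫₀ˣ f(s) ds`. -/
def Fprim (f : ℝ → ℝ) (x : ℝ) : ℝ := ∫ s in (0 : ℝ)..x, f s

/-- A domain as in the paper: bounded, open, connected, and such that `D` minus the
degeneracy set `{(x,y) ∈ closure D : x = 0}` consists of only one connected component. -/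
structure GoodDomain (m k : ℕ) (D : Set (GS m k)) : Prop where
  isOpen : IsOpen D
  isConnected : IsConnected D
  isBounded : Bornology.IsBounded D
  conn_off_degeneracy : IsConnected (D \ {z : GS m k | z ∈ closure D ∧ z.1 = 0})

/-- `D` supports the divergence formula: Green's first identity for `Δ_γ` holds for smooth
functions, the first of which vanishes on `∂D`. -/
def SupportsDivFormula {m k : ℕ} (γ : ℝ) (D : Set (GS m k)) : Prop :=
  ∀ v w : GS m k → ℝ, ContDiff ℝ (⊤ : ℕ∞) v → ContDiff ℝ (⊤ : ℕ∞) w →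
    (∀ z ∈ frontier D, v z = 0) →
    ∫ z in D, v z * lapG γ w z = -∫ z in D, dotG γ v w z

/-- The nonlinearity `f`: locally Lipschitz on `ℝ`, `f(0) = 0`, and `f(u) > 0` for `u > 0`. -/
structure GoodNonlinearity (f : ℝ → ℝ) : Prop where
  locallyLipschitz : LocallyLipschitz f
  zero : f 0 = 0
  pos : ∀ s : ℝ, 0 < s → 0 < f s

/-- The initial datum `u₀`: of class `C¹`, non-negative and non-trivial on `closure D`,
vanishing on `∂D`. -/
structure GoodInitialData {m k : ℕ} (D : Set (GS m k)) (u₀ : GS m k → ℝ) : Prop where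
  contDiff : ContDiff ℝ 1 u₀
  nonneg : ∀ z ∈ closure D, 0 ≤ u₀ z
  nontrivial : ∃ z ∈ D, u₀ z ≠ 0
  bdry : ∀ z ∈ frontier D, u₀ z = 0

/-- A positive classical solution `u` of the pseudo-parabolic problem
`u_t − Δ_γ u_t − Δ_γ u = f(u)` in `D × (0,T)`, `u = 0` on `∂D × (0,T)`, `u(0) = u₀`
on `closure D`, where `T ∈ (0,∞]` is the interval of existence; `u` is smooth enough
that all derivatives exist. -/
structure IsPosSolution {m k : ℕ} (γ : ℝ) (D : Set (GS m k)) (f : ℝ → ℝ)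
    (u₀ : GS m k → ℝ) (T : ℝ≥0∞) (u : ℝ → GS m k → ℝ) : Prop where
  smooth : ContDiff ℝ (⊤ : ℕ∞) (fun p : ℝ × GS m k => u p.1 p.2)
  pos : ∀ t : ℝ, 0 < t → ENNReal.ofReal t < T → ∀ z ∈ D, 0 < u t z
  eqn : ∀ t : ℝ, 0 < t → ENNReal.ofReal t < T → ∀ z ∈ D,
    deriv (fun s => u s z) t
      - lapG γ (fun w => deriv (fun s => u s w) t) z
      - lapG γ (u t) z = f (u t z)
  bdry : ∀ t : ℝ, 0 < t → ENNReal.ofReal t < T → ∀ z ∈ frontier D, u t z = 0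
  init : ∀ z ∈ closure D, u 0 z = u₀ z


/-- **Poincaré inequality for the Baouendi–Grushin operator** (Lemma from \[SY20\]):
there exists a constant `λ₁ > 0` such that
`∫_D |∇_γ v|² ≥ λ₁ ∫_D |v|²` for every `v ∈ C_c^∞(D)`
(hence, by density, for every `v` in the Sobolev space `H₀^{1,γ}(D)`). -/
theorem grushin_poincare_inequality
    (m k : ℕ) (hm : 1 ≤ m) (hk : 1 ≤ k) (γ : ℝ) (hγ : 0 ≤ γ)
    (D : Set (GS m k)) (hD : GoodDomain m k D) (hDiv : SupportsDivFormula γ D) :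
    ∃ lam1 : ℝ, 0 < lam1 ∧
      ∀ v : GS m k → ℝ, ContDiff ℝ (⊤ : ℕ∞) v → HasCompactSupport v → tsupport v ⊆ D →
        lam1 * ∫ z in D, (v z) ^ 2 ≤ ∫ z in D, gradSqG γ v z := by
  obtain ⟨R₀, hR₀⟩ := hD.isBounded.exists_norm_le
  set R : ℝ := max R₀ 1 with hRdef
  have hR1 : 1 ≤ R := le_max_right _ _
  have hRpos : 0 < R := by linarith
  have hR : ∀ z ∈ D, ‖z‖ ≤ R := fun z hz => (hR₀ z hz).trans (le_max_left _ _)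
  refine ⟨1 / (4 * R ^ 2), by positivity, ?_⟩
  intro v hv hvc hvD
  let i₀ : Fin m := ⟨0, hm⟩
  have hdiff : Differentiable ℝ v := hv.differentiable (by simp)
  have hcd : ∀ e : GS m k, Continuous (fun z => fderiv ℝ v z e) := fun e =>
    (hv.continuous_fderiv (by simp)).clm_apply continuous_const
  have hv0 : ∀ z, z ∉ D → v z = 0 := fun z hz =>
    image_eq_zero_of_notMem_tsupport (fun h => hz (hvD h))
  have hdvt : ∀ z, z ∉ tsupport v → fderiv ℝ v z = 0 := fun z hz =>
    fderiv_of_notMem_tsupport (𝕜 := ℝ) hz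
  have hdv0 : ∀ z, z ∉ D → fderiv ℝ v z = 0 := fun z hz => hdvt z (fun h => hz (hvD h))
  have hg0 : ∀ z, fderiv ℝ v z = 0 → gradSqG γ v z = 0 := by
    intro z hz
    simp [gradSqG, hz]
  rw [setIntegral_eq_integral_of_forall_compl_eq_zero (fun z hz => by simp [hv0 z hz]),
    setIntegral_eq_integral_of_forall_compl_eq_zero (fun z hz => hg0 z (hdv0 z hz))]
  have hcg : Continuous (gradSqG γ v) := by
    unfold gradSqG
    refine Continuous.add (continuous_finsetSum _ fun i _ => (hcd _).pow 2) (Continuous.mul ?_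
      (continuous_finsetSum _ fun i _ => (hcd _).pow 2))
    exact (continuous_fst.norm).rpow_const (fun _ => Or.inr (by positivity))
  have hig : Integrable (gradSqG γ v) :=
    hcg.integrable_of_hasCompactSupport
      (HasCompactSupport.intro hvc (fun z hz => hg0 z (hdvt z hz)))
  have hiv : Integrable (fun z => v z ^ 2) :=
    (hv.continuous.pow 2).integrable_of_hasCompactSupport
      (HasCompactSupport.intro hvc (fun z hz => by
        simp [image_eq_zero_of_notMem_tsupport hz]))
  let L : GS m k →L[ℝ] ℝ :=
    (EuclideanSpace.proj i₀).comp (ContinuousLinearMap.fst ℝ _ _)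
  have hL : ∀ z, L z = z.1 i₀ := fun z => rfl
  have hLe : L (eX m k i₀) = 1 := by simp [hL, eX]
  have hLD : ∀ z ∈ D, |L z| ≤ R := by
    intro z hz
    refine le_trans ?_ (hR z hz)
    rw [hL, ← Real.norm_eq_abs]
    exact (PiLp.norm_apply_le z.1 i₀).trans (norm_fst_le z)
  have hdsq : ∀ z, fderiv ℝ (fun z => v z ^ 2) z (eX m k i₀)
      = 2 * v z * fderiv ℝ v z (eX m k i₀) := by
    intro z
    have h := ((hdiff z).hasFDerivAt.pow 2).fderiv
    have h2 : fderiv ℝ (fun z => v z ^ 2) z = _ := h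
    rw [h2]
    simp
  have hi3 : Integrable (fun z => L z * (2 * v z * fderiv ℝ v z (eX m k i₀))) :=
    (L.continuous.mul ((continuous_const.mul hv.continuous).mul
      (hcd _))).integrable_of_hasCompactSupport
      (HasCompactSupport.intro hvc (fun z hz => by
        simp [image_eq_zero_of_notMem_tsupport hz]))
  have hi4 : Integrable (fun z => L z * v z ^ 2) :=
    (L.continuous.mul (hv.continuous.pow 2)).integrable_of_hasCompactSupport
      (HasCompactSupport.intro hvc (fun z hz => by
        simp [image_eq_zero_of_notMem_tsupport hz]))
  have key : ∫ z, L z * (2 * v z * fderiv ℝ v z (eX m k i₀)) = - ∫ z, v z ^ 2 := by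
    haveI : (volume : Measure (GS m k)).IsAddHaarMeasure :=
      inferInstanceAs ((volume : Measure (EuclideanSpace ℝ (Fin m))).prod
        (volume : Measure (EuclideanSpace ℝ (Fin k)))).IsAddHaarMeasure
    have h := integral_mul_fderiv_eq_neg_fderiv_mul_of_integrable (𝕜 := ℝ)
      (μ := (volume : Measure (GS m k)))
      (f := fun z => L z) (g := fun z => v z ^ 2) (v := eX m k i₀)
      (by simpa [hLe] using hiv) (by simpa only [hdsq] using hi3) hi4
      (fun z _ => L.differentiable z) (fun z _ => (hdiff.pow 2) z)
    simpa only [hdsq, ContinuousLinearMap.fderiv, hLe, one_mul] using h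
  have hpt : ∀ z, -(L z * (2 * v z * fderiv ℝ v z (eX m k i₀)))
      ≤ (1 / 2) * v z ^ 2 + (2 * R ^ 2) * gradSqG γ v z := by
    intro z
    by_cases hz : z ∈ D
    · have h1 : (fderiv ℝ v z (eX m k i₀)) ^ 2 ≤ gradSqG γ v z := by
        unfold gradSqG
        have ha := Finset.single_le_sum (f := fun i => (fderiv ℝ v z (eX m k i)) ^ 2)
          (fun i _ => sq_nonneg _) (Finset.mem_univ i₀)
        have hb : 0 ≤ ‖z.1‖ ^ (2 * γ) * ∑ j, (fderiv ℝ v z (eY m k j)) ^ 2 := by positivity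
        linarith
      have h2 : L z ^ 2 ≤ R ^ 2 := sq_le_sq' (abs_le.mp (hLD z hz)).1 (abs_le.mp (hLD z hz)).2
      have h3 : L z ^ 2 * (fderiv ℝ v z (eX m k i₀)) ^ 2 ≤ R ^ 2 * gradSqG γ v z :=
        mul_le_mul h2 h1 (sq_nonneg _) (sq_nonneg _)
      nlinarith [sq_nonneg (v z + 2 * (L z * fderiv ℝ v z (eX m k i₀)))]
    · simp [hv0 z hz, hg0 z (hdv0 z hz)]
  have hint := integral_mono hi3.neg ((hiv.const_mul (1 / 2)).add (hig.const_mul (2 * R ^ 2))) hpt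
  have e1 : ∫ z, (-fun z => L z * (2 * v z * fderiv ℝ v z (eX m k i₀))) z = ∫ z, v z ^ 2 := by
    simp only [Pi.neg_apply]
    rw [integral_neg, key, neg_neg]
  have e2 : ∫ z, ((fun z => (1 / 2) * v z ^ 2 : GS m k → ℝ) + (fun z => (2 * R ^ 2) * gradSqG γ v z : GS m k → ℝ)) z
      = (1 / 2) * (∫ z, v z ^ 2) + (2 * R ^ 2) * ∫ z, gradSqG γ v z := by
    simp only [Pi.add_apply]
    rw [integral_add (hiv.const_mul (1 / 2)) (hig.const_mul (2 * R ^ 2)),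
      integral_const_mul, integral_const_mul]
  rw [e1, e2] at hint
  rw [div_mul_eq_mul_div, one_mul, div_le_iff₀ (by positivity)]
  linarith
end
end

section
/- Let u be a positive classical solution of the pseudo-parabolic problem, and for θ ∈ ℝ define the energy functional 𝓕(t) := −(1/2)∫_D |∇_γ u(x,y,t)|² dxdy + ∫_D (F(u(x,y,t)) − θ) dxdy, where F(u) := ∫₀^u f(s) ds. Then for all t ≥ 0 in the interval of existence, 𝓕(t) = 𝓕(0) + ∫₀^t ∫_D (u_τ² + |∇_γ u_τ|²) dxdy dτ; in particular, 𝓕 is non-decreasing in t. -/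
open MeasureTheory Real Set Filter
open scoped ENNReal

noncomputable section

lemma aux_int {m k : ℕ} {D : Set (GS m k)} (hb : Bornology.IsBounded D) {g : GS m k → ℝ}
    (hg : Continuous g) : IntegrableOn g D :=
  (hg.continuousOn.integrableOn_compact hb.isCompact_closure).mono_set subset_closure

lemma aux_cont {m k : ℕ} {D : Set (GS m k)} (hb : Bornology.IsBounded D)
    {g : ℝ × GS m k → ℝ} (hg : Continuous g) :
    Continuous (fun t => ∫ z in D, g (t, z)) := by
  have h := continuous_parametric_integral_of_continuous
    (μ := (volume : Measure (GS m k)).restrict D) (f := fun (t : ℝ) (z : GS m k) => g (t, z))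
    hg hb.isCompact_closure
  have e : ((volume : Measure (GS m k)).restrict D).restrict (closure D) = volume.restrict D := by
    rw [Measure.restrict_restrict isClosed_closure.measurableSet,
      inter_eq_right.2 subset_closure]
  rw [e] at h
  exact h

lemma aux_deriv {m k : ℕ} {D : Set (GS m k)} (hb : Bornology.IsBounded D)
    {g g' : ℝ × GS m k → ℝ} (hg : Continuous g) (hg' : Continuous g')
    (hd : ∀ t z, HasDerivAt (fun s => g (s, z)) (g' (t, z)) t) (t : ℝ) :
    HasDerivAt (fun t => ∫ z in D, g (t, z)) (∫ z in D, g' (t, z)) t := by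
  have hK : IsCompact (Metric.closedBall t 1 ×ˢ closure D) :=
    (isCompact_closedBall t 1).prod hb.isCompact_closure
  obtain ⟨C, hC⟩ := hK.exists_bound_of_continuousOn hg'.continuousOn
  have hfin : IsFiniteMeasure ((volume : Measure (GS m k)).restrict D) :=
    ⟨by simpa using hb.measure_lt_top⟩
  refine (hasDerivAt_integral_of_dominated_loc_of_deriv_le
    (μ := (volume : Measure (GS m k)).restrict D)
    (F := fun s z => g (s, z)) (F' := fun s z => g' (s, z)) (bound := fun _ => C)
    (Metric.closedBall_mem_nhds t one_pos) ?_ ?_ ?_ ?_ ?_ ?_).2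
  · exact Eventually.of_forall fun s =>
      (hg.comp (by fun_prop : Continuous fun z : GS m k => (s, z))).aestronglyMeasurable
  · exact aux_int hb (hg.comp (by fun_prop : Continuous fun z : GS m k => (t, z)))
  · exact (hg'.comp (by fun_prop : Continuous fun z : GS m k => (t, z))).aestronglyMeasurable
  · have : ∀ᵐ z ∂((volume : Measure (GS m k)).restrict (closure D)), ∀ s ∈ Metric.closedBall t 1, ‖g' (s, z)‖ ≤ C := by
      refine ae_restrict_of_forall_mem isClosed_closure.measurableSet fun z hz s hs => hC _ ⟨hs, hz⟩
    exact ae_mono (Measure.restrict_mono subset_closure le_rfl) this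
  · exact integrable_const C
  · exact Eventually.of_forall fun z s _ => hd s z

lemma aux_part {m k : ℕ} {W : ℝ × GS m k → ℝ} (hW : ContDiff ℝ (⊤ : ℕ∞) W) (t : ℝ)
    (z e : GS m k) : fderiv ℝ (fun w => W (t, w)) z e = fderiv ℝ W (t, z) (0, e) := by
  have h1 : HasFDerivAt W (fderiv ℝ W (t, z)) (t, z) :=
    (hW.differentiable (by simp) _).hasFDerivAt
  have h2 := h1.comp z (hasFDerivAt_prodMk_right (𝕜 := ℝ) t z)
  have h3 : fderiv ℝ (fun w => W (t, w)) z = _ := h2.fderiv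
  rw [h3]; simp

lemma aux_time {m k : ℕ} {W : ℝ × GS m k → ℝ} (hW : ContDiff ℝ (⊤ : ℕ∞) W) (t : ℝ)
    (z : GS m k) : HasDerivAt (fun s => W (s, z)) (fderiv ℝ W (t, z) (1, 0)) t := by
  have h1 : HasFDerivAt W (fderiv ℝ W (t, z)) (t, z) :=
    (hW.differentiable (by simp) _).hasFDerivAt
  have h2 := h1.comp_hasDerivAt t ((hasDerivAt_id t).prodMk (hasDerivAt_const t z))
  exact h2

lemma aux_smooth {m k : ℕ} {W : ℝ × GS m k → ℝ} (hW : ContDiff ℝ (⊤ : ℕ∞) W)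
    (v : ℝ × GS m k) : ContDiff ℝ (⊤ : ℕ∞) (fun p => fderiv ℝ W p v) :=
  (hW.fderiv_right (m := (⊤ : ℕ∞)) (by simp)).clm_apply contDiff_const

lemma aux_symm {m k : ℕ} {W : ℝ × GS m k → ℝ} (hW : ContDiff ℝ (⊤ : ℕ∞) W) (t : ℝ)
    (z e : GS m k) : HasDerivAt (fun s => fderiv ℝ W (s, z) (0, e))
      (fderiv ℝ (fun p => fderiv ℝ W p (1, 0)) (t, z) (0, e)) t := by
  have h := aux_time (aux_smooth hW (0, e)) t z
  have hd : DifferentiableAt ℝ (fderiv ℝ W) (t, z) :=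
    (hW.fderiv_right (m := (⊤ : ℕ∞)) (by simp)).differentiable (by simp) _
  have hs : ∀ v w, fderiv ℝ (fun p => fderiv ℝ W p v) (t, z) w
      = fderiv ℝ (fderiv ℝ W) (t, z) w v := by
    intro v w
    rw [fderiv_clm_apply hd (differentiableAt_const v)]
    simp
  have hsym : IsSymmSndFDerivAt ℝ W (t, z) :=
    hW.contDiffAt.isSymmSndFDerivAt (by
      rw [minSmoothness_of_isRCLikeNormedField]; exact WithTop.coe_le_coe.2 (le_top : (2 : ℕ∞) ≤ ⊤))
  rw [hs] at h ⊢
  rw [hsym.eq] at h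
  exact h

lemma aux_norm {m k : ℕ} {γ : ℝ} (hγ : 0 ≤ γ) :
    Continuous (fun z : GS m k => ‖z.1‖ ^ (2 * γ)) :=
  (continuous_fst.norm).rpow_const fun _ => Or.inr (by positivity)

lemma aux_smooth' {m k : ℕ} {v : GS m k → ℝ} (hv : ContDiff ℝ (⊤ : ℕ∞) v)
    (e : GS m k) : ContDiff ℝ (⊤ : ℕ∞) (fun p => fderiv ℝ v p e) :=
  (hv.fderiv_right (m := (⊤ : ℕ∞)) (by simp)).clm_apply contDiff_const

lemma aux_lap {m k : ℕ} {γ : ℝ} (hγ : 0 ≤ γ) {v : GS m k → ℝ}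
    (hv : ContDiff ℝ (⊤ : ℕ∞) v) : Continuous (lapG γ v) := by
  unfold lapG
  have h : ∀ e : GS m k, Continuous (fun z => fderiv ℝ (fun w => fderiv ℝ v w e) z e) :=
    fun e => (aux_smooth' (aux_smooth' hv e) e).continuous
  exact (continuous_finsetSum _ fun i _ => h _).add
    ((aux_norm hγ).mul (continuous_finsetSum _ fun i _ => h _))

lemma aux_dot {m k : ℕ} {γ : ℝ} (hγ : 0 ≤ γ) {v w : GS m k → ℝ}
    (hv : ContDiff ℝ (⊤ : ℕ∞) v) (hw : ContDiff ℝ (⊤ : ℕ∞) w) : Continuous (dotG γ v w) := by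
  unfold dotG
  have h : ∀ e : GS m k, Continuous (fun z => fderiv ℝ v z e * fderiv ℝ w z e) :=
    fun e => (aux_smooth' hv e).continuous.mul (aux_smooth' hw e).continuous
  exact (continuous_finsetSum _ fun i _ => h _).add
    ((aux_norm hγ).mul (continuous_finsetSum _ fun i _ => h _))

lemma aux_dotc {m k : ℕ} {γ : ℝ} (hγ : 0 ≤ γ) {V W : ℝ × GS m k → ℝ}
    (hV : ContDiff ℝ (⊤ : ℕ∞) V) (hW : ContDiff ℝ (⊤ : ℕ∞) W) :
    Continuous (fun p : ℝ × GS m k =>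
      dotG γ (fun w => V (p.1, w)) (fun w => W (p.1, w)) p.2) := by
  unfold dotG
  simp only [aux_part hV, aux_part hW]
  have h : ∀ e : GS m k, Continuous (fun p : ℝ × GS m k =>
      fderiv ℝ V (p.1, p.2) (0, e) * fderiv ℝ W (p.1, p.2) (0, e)) :=
    fun e => (aux_smooth hV _).continuous.mul (aux_smooth hW _).continuous
  exact (continuous_finsetSum _ fun i _ => h _).add
    (((aux_norm hγ).comp continuous_snd).mul (continuous_finsetSum _ fun i _ => h _))

lemma aux_grad {m k : ℕ} (γ : ℝ) (v : GS m k → ℝ) : gradSqG γ v = dotG γ v v := by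
  funext z
  simp only [gradSqG, dotG, pow_two]

lemma aux_gradd {m k : ℕ} {γ : ℝ} {W : ℝ × GS m k → ℝ}
    (hW : ContDiff ℝ (⊤ : ℕ∞) W) (t : ℝ) (z : GS m k) :
    HasDerivAt (fun s => gradSqG γ (fun w => W (s, w)) z)
      (2 * dotG γ (fun w => fderiv ℝ W (t, w) (1, 0)) (fun w => W (t, w)) z) t := by
  unfold gradSqG dotG
  have e1 := fun e => aux_part (aux_smooth hW (1, 0)) t z e
  simp only [aux_part hW, e1]
  have h : ∀ e : GS m k, HasDerivAt (fun s => fderiv ℝ W (s, z) (0, e) ^ 2)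
      (2 * (fderiv ℝ (fun p => fderiv ℝ W p (1, 0)) (t, z) (0, e) * fderiv ℝ W (t, z) (0, e))) t := by
    intro e
    refine ((aux_symm hW t z e).fun_pow 2).congr_deriv ?_
    simp; ring
  refine ((HasDerivAt.fun_sum fun i _ => h (eX m k i)).add
    ((HasDerivAt.fun_sum fun i _ => h (eY m k i)).const_mul (‖z.1‖ ^ (2 * γ)))).congr_deriv ?_
  simp only [← Finset.mul_sum]
  ring

/-- **Energy identity.** For a positive classical solution `u` of the pseudo-parabolic
problem and `𝓕(t) := −(1/2)∫_D |∇_γ u(t)|² + ∫_D (F(u(t)) − θ)`, one has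
`𝓕(t) = 𝓕(0) + ∫₀ᵗ ∫_D (u_τ² + |∇_γ u_τ|²)`; in particular `𝓕` is non-decreasing. -/
theorem grushin_energy_identity
    (m k : ℕ) (hm : 1 ≤ m) (hk : 1 ≤ k) (γ : ℝ) (hγ : 0 ≤ γ)
    (D : Set (GS m k)) (hD : GoodDomain m k D) (hDiv : SupportsDivFormula γ D)
    (f : ℝ → ℝ) (hf : GoodNonlinearity f) (θ : ℝ)
    (u₀ : GS m k → ℝ) (T : ℝ≥0∞) (hT : 0 < T) (u : ℝ → GS m k → ℝ)
    (hu : IsPosSolution γ D f u₀ T u) :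
    (∀ t : ℝ, 0 ≤ t → ENNReal.ofReal t < T →
      (-(1 / 2) * (∫ z in D, gradSqG γ (u t) z) + ∫ z in D, (Fprim f (u t z) - θ))
        = (-(1 / 2) * (∫ z in D, gradSqG γ (u 0) z) + ∫ z in D, (Fprim f (u 0 z) - θ))
          + ∫ τ in (0 : ℝ)..t, ∫ z in D,
              ((deriv (fun s => u s z) τ) ^ 2
                + gradSqG γ (fun w => deriv (fun s => u s w) τ) z)) ∧
    (∀ t₁ t₂ : ℝ, 0 ≤ t₁ → t₁ ≤ t₂ → ENNReal.ofReal t₂ < T →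
      (-(1 / 2) * (∫ z in D, gradSqG γ (u t₁) z) + ∫ z in D, (Fprim f (u t₁ z) - θ))
        ≤ -(1 / 2) * (∫ z in D, gradSqG γ (u t₂) z) + ∫ z in D, (Fprim f (u t₂ z) - θ)) := by
  have hb := hD.isBounded
  set U : ℝ × GS m k → ℝ := fun p => u p.1 p.2 with hUdef
  have hU : ContDiff ℝ (⊤ : ℕ∞) U := hu.smooth
  set V : ℝ × GS m k → ℝ := fun p => fderiv ℝ U p (1, 0) with hVdef
  have hV : ContDiff ℝ (⊤ : ℕ∞) V := aux_smooth hU _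
  have hslice : ∀ (W : ℝ × GS m k → ℝ), ContDiff ℝ (⊤ : ℕ∞) W → ∀ t,
      ContDiff ℝ (⊤ : ℕ∞) (fun w => W (t, w)) := fun W hW t =>
    hW.comp (contDiff_const.prodMk contDiff_id)
  have hder : ∀ t z, deriv (fun s => u s z) t = V (t, z) := fun t z => (aux_time hU t z).deriv
  have hfc : Continuous f := hf.locallyLipschitz.continuous
  have hFd : ∀ x, HasDerivAt (Fprim f) (f x) x := fun x =>
    intervalIntegral.integral_hasDerivAt_right (hfc.intervalIntegrable _ _)
      (hfc.stronglyMeasurableAtFilter _ _) hfc.continuousAt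
  have hFc : Continuous (Fprim f) :=
    continuous_iff_continuousAt.2 fun x => (hFd x).continuousAt
  set E : ℝ → ℝ := fun t => -(1 / 2) * (∫ z in D, gradSqG γ (u t) z)
    + ∫ z in D, (Fprim f (u t z) - θ) with hE
  set G : ℝ → ℝ := fun τ => ∫ z in D, ((deriv (fun s => u s z) τ) ^ 2
                + gradSqG γ (fun w => deriv (fun s => u s w) τ) z) with hG
  have hGc : Continuous G := by
    simp only [hG, hder, aux_grad]
    exact aux_cont hb (g := fun p => V p ^ 2 +
      dotG γ (fun w => V (p.1, w)) (fun w => V (p.1, w)) p.2)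
      ((hV.continuous.pow 2).add (aux_dotc hγ hV hV))
  have hEd : ∀ t, HasDerivAt E (-(1 / 2) * (∫ z in D, 2 * dotG γ (fun w => V (t, w)) (u t) z)
      + ∫ z in D, f (u t z) * V (t, z)) t := by
    intro t
    refine HasDerivAt.add (HasDerivAt.const_mul _ ?_) ?_
    · refine aux_deriv hb (g := fun p => gradSqG γ (fun w => U (p.1, w)) p.2)
        (g' := fun p => 2 * dotG γ (fun w => V (p.1, w)) (fun w => U (p.1, w)) p.2) ?_ ?_ ?_ t
      · simp only [aux_grad]; exact aux_dotc hγ hU hU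
      · exact continuous_const.mul (aux_dotc hγ hV hU)
      · intro t z; exact aux_gradd hU t z
    · refine aux_deriv hb (g := fun p => Fprim f (U p) - θ)
        (g' := fun p => f (U p) * V p) ?_ ?_ ?_ t
      · exact (hFc.comp hU.continuous).sub continuous_const
      · exact (hfc.comp hU.continuous).mul hV.continuous
      · intro t z
        exact ((hFd (U (t, z))).comp t (aux_time hU t z)).sub_const θ
  have hlt : ∀ {s t : ℝ}, s ≤ t → ENNReal.ofReal t < T → ENNReal.ofReal s < T :=
    fun h h' => (ENNReal.ofReal_le_ofReal h).trans_lt h'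
  have hEG : ∀ t, 0 < t → ENNReal.ofReal t < T → HasDerivAt E (G t) t := by
    intro t ht htT
    refine (hEd t).congr_deriv ?_
    have hVt := hslice V hV t
    have hUt : ContDiff ℝ (⊤ : ℕ∞) (u t) := hslice U hU t
    have hev : ∀ᶠ s in nhds t, 0 < s ∧ ENNReal.ofReal s < T :=
      (lt_mem_nhds ht).and
        (ENNReal.continuous_ofReal.continuousAt.eventually (gt_mem_nhds htT))
    have hbd : ∀ z ∈ frontier D, V (t, z) = 0 := by
      intro z hz
      rw [← hder]
      have : (fun s => u s z) =ᶠ[nhds t] fun _ => 0 :=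
        hev.mono fun s hs => hu.bdry s hs.1 hs.2 z hz
      rw [this.deriv_eq]; simp
    have g1 := hDiv _ _ hVt hVt hbd
    have g2 := hDiv _ _ hVt hUt hbd
    have e1 : ∫ z in D, f (u t z) * V (t, z) = ∫ z in D, (V (t, z) ^ 2
        - V (t, z) * lapG γ (fun w => V (t, w)) z - V (t, z) * lapG γ (u t) z) := by
      refine setIntegral_congr_fun hD.isOpen.measurableSet fun z hz => ?_
      have := hu.eqn t ht htT z hz
      simp only [hder] at this
      simp only [← this]
      ring
    have i1 : IntegrableOn (fun z => V (t, z) ^ 2) D := aux_int hb (hVt.continuous.pow 2)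
    have i2 : IntegrableOn (fun z => V (t, z) * lapG γ (fun w => V (t, w)) z) D :=
      aux_int hb (hVt.continuous.mul (aux_lap hγ hVt))
    have i5 : IntegrableOn (fun z => V (t, z) ^ 2 - V (t, z) * lapG γ (fun w => V (t, w)) z) D :=
      i1.sub i2
    have i3 : IntegrableOn (fun z => V (t, z) * lapG γ (u t) z) D :=
      aux_int hb (hVt.continuous.mul (aux_lap hγ hUt))
    have i4 : IntegrableOn (fun z => dotG γ (fun w => V (t, w)) (fun w => V (t, w)) z) D :=
      aux_int hb (aux_dot hγ hVt hVt)
    simp only [hG, hder, aux_grad]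
    rw [e1, integral_sub i5 i3, integral_sub i1 i2, integral_add i1 i4, g1, g2,
      integral_const_mul]
    ring
  have key : ∀ a b : ℝ, 0 ≤ a → a ≤ b → ENNReal.ofReal b < T →
      ∫ τ in a..b, G τ = E b - E a := by
    intro a b ha hab hbT
    refine intervalIntegral.integral_eq_sub_of_hasDerivAt_of_le hab
      (fun s _ => (hEd s).continuousAt.continuousWithinAt) ?_ (hGc.intervalIntegrable _ _)
    intro s hs
    exact hEG s (ha.trans_lt hs.1) (hlt hs.2.le hbT)
  refine ⟨fun t ht htT => ?_, fun t₁ t₂ h1 h12 h2 => ?_⟩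
  · have := key 0 t le_rfl ht htT
    change E t = E 0 + ∫ τ in (0 : ℝ)..t, G τ
    linarith
  · have := key t₁ t₂ h1 h12 h2
    change E t₁ ≤ E t₂
    have hn : 0 ≤ ∫ τ in t₁..t₂, G τ := by
      refine intervalIntegral.integral_nonneg_of_forall h12 fun s => ?_
      refine integral_nonneg fun z => ?_
      unfold gradSqG
      simp only [Pi.zero_apply]
      positivity
    linarith

end
end
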